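/- arXiv:2112.02553 — 3 statements merged into one kernel-verified Lean document; each statement's English description precedes it below -/
import Mathlib

section
/- Let R > 0, let S = (r_S, φ_S) be a site with 0 ≤ r_S ≤ R, and let φ_T ∈ ℝ be an angle such that (r_S, φ_S) is not the point (R, φ_T) (i.e. r_S ≠ R, or φ_S − φ_T is not a multiple of 2π). Then there exists exactly one r ∈ [0, R] with arcosh(cosh r · cosh r_S − sinh r · sinh r_S · cos(φ_T − φ_S)) = R − r. (Thus the degenerate beach ellipse of a site on the sweep circle, namely the segment from the pole O to (R, φ_T), meets the beach ellipse of S in exactly one point, which is the unique point of the segment equidistant from S and (R, φ_T).) -/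
/-- Inverse hyperbolic cosine: `arcosh x = log (x + √(x² − 1))`. -/
noncomputable def arcosh (x : ℝ) : ℝ := Real.log (x + Real.sqrt (x ^ 2 - 1))

/-- Hyperbolic distance between points given in polar coordinates. -/
noncomputable def dH (r₁ φ₁ r₂ φ₂ : ℝ) : ℝ :=
  arcosh (Real.cosh r₁ * Real.cosh r₂ - Real.sinh r₁ * Real.sinh r₂ * Real.cos (φ₁ - φ₂))

/-!
By the hyperbolic law of cosines, `dH = R - r` is a linear homogeneous equation in `cosh r` and
`sinh r`, namely `tanh r = (cosh R - cosh r_S) / (sinh R - sinh r_S * cos (φ_T - φ_S))`. The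
denominator is positive because `S` is not the endpoint `(R, φ_T)`, the numerator is nonnegative
because `r_S ≤ R`, and the quotient is at most `tanh R` because the hyperbolic cosine of the
distance from `S` to `(R, φ_T)` is at least `1`. As `tanh` is strictly increasing and continuous,
the equation has exactly one solution in `[0, R]`.
-/

section

open Set
open Real hiding arcosh

theorem existsUnique_mem_Icc_tanh_eq {a b t : ℝ} (ht : t ∈ Icc (tanh a) (tanh b)) :
    ∃! r, r ∈ Icc a b ∧ tanh r = t := by
  have ht₁ : t ∈ Ioo (-1) 1 :=
    ⟨(neg_one_lt_tanh a).trans_le ht.1, ht.2.trans_lt (tanh_lt_one b)⟩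
  refine ⟨artanh t, ⟨⟨?_, ?_⟩, tanh_artanh ht₁⟩, ?_⟩
  · simpa only [artanh_tanh] using artanh_le_artanh (neg_one_lt_tanh a) ht₁.2 ht.1
  · simpa only [artanh_tanh] using artanh_le_artanh ht₁.1 (tanh_lt_one b) ht.2
  · rintro r ⟨-, rfl⟩
    exact (artanh_tanh r).symm

theorem cosh_abs_sub_abs_le (r s θ : ℝ) :
    cosh (|r| - |s|) ≤ cosh r * cosh s - sinh r * sinh s * cos θ := by
  have h : sinh r * sinh s * cos θ ≤ |sinh r| * |sinh s| :=
    calc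
      sinh r * sinh s * cos θ ≤ |sinh r * sinh s * cos θ| := le_abs_self _
      _ = |sinh r * sinh s| * |cos θ| := abs_mul _ _
      _ ≤ |sinh r * sinh s| := mul_le_of_le_one_right (abs_nonneg _) (abs_cos_le_one θ)
      _ = |sinh r| * |sinh s| := abs_mul _ _
  rw [cosh_sub, cosh_abs, cosh_abs, ← abs_sinh, ← abs_sinh]
  linarith

theorem one_le_cosh_mul_cosh_sub (r s θ : ℝ) :
    1 ≤ cosh r * cosh s - sinh r * sinh s * cos θ :=
  (one_le_cosh _).trans (cosh_abs_sub_abs_le r s θ)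

-- `arcosh` unfolds to the same formula as `Real.arcosh`, so the lemmas on the latter apply to `dH`.
theorem cosh_dH (r φ s ψ : ℝ) :
    cosh (dH r φ s ψ) = cosh r * cosh s - sinh r * sinh s * cos (φ - ψ) :=
  cosh_arcosh (one_le_cosh_mul_cosh_sub r s (φ - ψ))

theorem dH_nonneg (r φ s ψ : ℝ) : 0 ≤ dH r φ s ψ :=
  arcosh_nonneg (one_le_cosh_mul_cosh_sub r s (φ - ψ))

theorem dH_eq_sub_iff {r R : ℝ} (hr : r ≤ R) (φ s ψ : ℝ) :
    dH r φ s ψ = R - r ↔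
      sinh r * (sinh R - sinh s * cos (φ - ψ)) = (cosh R - cosh s) * cosh r := by
  rw [← cosh_injOn.eq_iff (dH_nonneg r φ s ψ) (sub_nonneg.2 hr), cosh_dH, cosh_sub]
  constructor <;> intro h <;> linarith

theorem dH_eq_sub_iff_tanh_eq {r R s φ ψ : ℝ} (hr : r ≤ R)
    (hpos : sinh s * cos (φ - ψ) < sinh R) :
    dH r φ s ψ = R - r ↔
      tanh r = (cosh R - cosh s) / (sinh R - sinh s * cos (φ - ψ)) := by
  rw [dH_eq_sub_iff hr, tanh_eq_sinh_div_cosh,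
    div_eq_div_iff (cosh_pos r).ne' (sub_pos.2 hpos).ne']

theorem cosh_sub_div_sinh_sub_mem_Icc {R s θ : ℝ} (hs : |s| ≤ |R|)
    (hpos : sinh s * cos θ < sinh R) :
    (cosh R - cosh s) / (sinh R - sinh s * cos θ) ∈ Icc 0 (tanh R) := by
  refine ⟨div_nonneg (sub_nonneg.2 (cosh_le_cosh.2 hs)) (sub_pos.2 hpos).le, ?_⟩
  rw [tanh_eq_sinh_div_cosh, div_le_div_iff₀ (sub_pos.2 hpos) (cosh_pos R)]
  linarith [one_le_cosh_mul_cosh_sub R s θ, cosh_sq R]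

theorem sinh_mul_cos_lt_sinh {R s θ : ℝ} (hR : 0 < R) (hs₀ : 0 ≤ s) (hs : s ≤ R)
    (hne : s ≠ R ∨ cos θ ≠ 1) : sinh s * cos θ < sinh R := by
  rcases hs.lt_or_eq with hlt | rfl
  · calc
      sinh s * cos θ ≤ sinh s :=
        mul_le_of_le_one_right (sinh_nonneg_iff.2 hs₀) (cos_le_one θ)
      _ < sinh R := sinh_lt_sinh.2 hlt
  · have hcos : cos θ < 1 := (cos_le_one θ).lt_of_ne (hne.resolve_left fun h => h rfl)
    exact mul_lt_of_lt_one_right (sinh_pos_iff.2 hR) hcos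

theorem cos_sub_eq_one_iff_exists_int (φ ψ : ℝ) :
    cos (φ - ψ) = 1 ↔ ∃ k : ℤ, ψ - φ = 2 * π * k := by
  rw [← cos_neg, neg_sub, cos_eq_one_iff]
  simp only [eq_comm, mul_comm]

end

/-- The degenerate beach ellipse of a site on the sweep circle, namely the segment
from the pole to `(R, φ_T)`, meets the beach ellipse of a site `S = (r_S, φ_S)`
(with `S ≠ (R, φ_T)`) in exactly one point: there is a unique `r ∈ [0, R]` whose
distance to `S` equals its distance `R − r` to the sweep circle. -/
theorem degenerate_intersection (R rS φS φT : ℝ) (hR : 0 < R)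
    (hrS₀ : 0 ≤ rS) (hrS : rS ≤ R)
    (hdist : rS ≠ R ∨ ¬ ∃ k : ℤ, φS - φT = 2 * Real.pi * k) :
    ∃! r : ℝ, r ∈ Set.Icc 0 R ∧
      arcosh (Real.cosh r * Real.cosh rS -
        Real.sinh r * Real.sinh rS * Real.cos (φT - φS)) = R - r := by
  have hpos : Real.sinh rS * Real.cos (φT - φS) < Real.sinh R :=
    sinh_mul_cos_lt_sinh hR hrS₀ hrS
      (hdist.imp_right (mt (cos_sub_eq_one_iff_exists_int φT φS).1))
  have habs : |rS| ≤ |R| := abs_le_abs_of_nonneg hrS₀ hrS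
  have hquot := cosh_sub_div_sinh_sub_mem_Icc habs hpos
  rw [← Real.tanh_zero] at hquot
  change ∃! r : ℝ, r ∈ Set.Icc 0 R ∧ dH r φT rS φS = R - r
  exact (existsUnique_congr fun r => and_congr_right fun hr =>
    dH_eq_sub_iff_tanh_eq hr.2 hpos).2 (existsUnique_mem_Icc_tanh_eq hquot)
end

section
/- Let R > 0 be the sweep-circle radius and let S = (r_S, φ_S) and T = (r_T, φ_T) be two distinct sites (i.e. r_S ≠ r_T, or φ_S − φ_T is not a multiple of 2π) with 0 < r_S ≤ r_T < R. Then among the angles φ ∈ [0, 2π) with f_S(φ) = f_T(φ) there is exactly one with sin(φ − φ_T) > 0, exactly one with sin(φ − φ_T) < 0, and none with sin(φ − φ_T) = 0. (Thus for sweep radius strictly larger than r_T, the two intersections of the beach ellipses of S and T lie on opposite sides of the line through the pole O and T.) -/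
/-- Inverse hyperbolic tangent: `artanh x = (1/2) · log ((1 + x)/(1 − x))`. -/
noncomputable def artanh (x : ℝ) : ℝ := (1 / 2) * Real.log ((1 + x) / (1 - x))

/-- Beach-ellipse radius function of a site `(r_S, φ_S)` for sweep radius `R`. -/
noncomputable def ellipseFun (R rS φS φ : ℝ) : ℝ :=
  artanh ((Real.cosh R - Real.cosh rS) /
    (Real.sinh R - Real.sinh rS * Real.cos (φ - φS)))

/-!
After clearing denominators, `f_S φ = f_T φ` becomes `a cos (φ - φ_T) + b sin (φ - φ_T) = c`: a
point of the unit circle lies on a certain line. That line crosses the axis `sin = 0` at abscissa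
`c / a`. If `|c| < a`, this is an interior point of the disc, so the line is a secant that meets
the circle once on each side of the axis and never on it.

Here `c ≥ 0` because `r_S ≤ r_T`, and `c < a` says exactly that `f_S φ_T < f_T φ_T`. The radius
function of a site is largest in the direction of the site, where it equals `(R + r) / 2`. Hence
`f_S φ_T ≤ (R + r_S) / 2 ≤ (R + r_T) / 2 = f_T φ_T`, with one of the inequalities strict since the
sites are distinct.
-/

section UnitCircle

open Real (Angle pi_pos)

variable {a b c : ℝ} {θ ψ : Angle}

lemma sin_ne_zero_of_secant (hca : |c| < a) (hθ : a * θ.cos + b * θ.sin = c) : θ.sin ≠ 0 := by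
  obtain ⟨neg_a_lt, lt_a⟩ := abs_lt.1 hca
  intro hsin
  rw [hsin] at hθ
  rcases Angle.sin_eq_zero_iff.1 hsin with rfl | rfl
  · rw [Angle.cos_zero] at hθ
    linarith
  · rw [Angle.cos_coe_pi] at hθ
    linarith

lemma exists_secant_sin_pos (b : ℝ) (hca : |c| < a) :
    ∃ θ : Angle, a * θ.cos + b * θ.sin = c ∧ 0 < θ.sin := by
  obtain ⟨neg_a_lt, lt_a⟩ := abs_lt.1 hca
  have hmem : c ∈ Set.Ioo (a * Real.cos Real.pi + b * Real.sin Real.pi)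
      (a * Real.cos 0 + b * Real.sin 0) := by
    simp only [Real.cos_pi, Real.sin_pi, Real.cos_zero, Real.sin_zero]
    constructor <;> linarith
  obtain ⟨x, hx, hxc⟩ := intermediate_value_Ioo'
    (f := fun x ↦ a * Real.cos x + b * Real.sin x) pi_pos.le (by fun_prop) hmem
  exact ⟨x, hxc, Real.sin_pos_of_mem_Ioo hx⟩

lemma sin_eq_of_secant (hca : |c| < a) (hθ : a * θ.cos + b * θ.sin = c)
    (hψ : a * ψ.cos + b * ψ.sin = c) (hsin : 0 < θ.sin * ψ.sin) : θ.sin = ψ.sin := by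
  -- Eliminating the cosine leaves a quadratic in the sine with roots of opposite signs.
  have quadratic {ω : Angle} (hω : a * ω.cos + b * ω.sin = c) :
      (a ^ 2 + b ^ 2) * ω.sin ^ 2 - 2 * b * c * ω.sin + (c ^ 2 - a ^ 2) = 0 := by
    linear_combination (a * ω.cos - b * ω.sin + c) * hω.symm + a ^ 2 * ω.cos_sq_add_sin_sq
  by_contra hne
  have sum_roots : (a ^ 2 + b ^ 2) * (θ.sin + ψ.sin) = 2 * b * c :=
    mul_left_cancel₀ (sub_ne_zero.2 hne) (by linear_combination quadratic hθ - quadratic hψ)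
  have prod_roots : (a ^ 2 + b ^ 2) * (θ.sin * ψ.sin) = c ^ 2 - a ^ 2 := by
    linear_combination θ.sin * sum_roots - quadratic hθ
  have hca_sq : c ^ 2 < a ^ 2 := sq_lt_sq.2 (hca.trans_le (le_abs_self a))
  nlinarith [sq_nonneg a, sq_nonneg b]

lemma eq_of_secant (hca : |c| < a) (hθ : a * θ.cos + b * θ.sin = c)
    (hψ : a * ψ.cos + b * ψ.sin = c) (hsin : 0 < θ.sin * ψ.sin) : θ = ψ := by
  have hsin_eq : θ.sin = ψ.sin := sin_eq_of_secant hca hθ hψ hsin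
  have hcos_eq : θ.cos = ψ.cos :=
    mul_left_cancel₀ ((abs_nonneg c).trans_lt hca).ne'
      (by linear_combination hθ - hψ - b * hsin_eq)
  induction θ using Angle.induction_on
  induction ψ using Angle.induction_on
  exact Angle.cos_sin_inj hcos_eq hsin_eq

lemma existsUnique_secant_sin_pos (b : ℝ) (hca : |c| < a) :
    ∃! θ : Angle, a * θ.cos + b * θ.sin = c ∧ 0 < θ.sin :=
  existsUnique_of_exists_of_unique (exists_secant_sin_pos b hca)
    fun _ _ hθ hψ ↦ eq_of_secant hca hθ.1 hψ.1 (mul_pos hθ.2 hψ.2)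

lemma existsUnique_secant_sin_neg (b : ℝ) (hca : |c| < a) :
    ∃! θ : Angle, a * θ.cos + b * θ.sin = c ∧ θ.sin < 0 := by
  rw [(Equiv.neg Angle).bijective.existsUnique_iff]
  simpa using existsUnique_secant_sin_pos (-b) hca

lemma existsUnique_mem_Ico_coe_sub_iff (p : Angle → Prop) (x y : ℝ) :
    (∃! φ : ℝ, φ ∈ Set.Ico x (x + 2 * Real.pi) ∧ p ↑(φ - y)) ↔ ∃! θ, p θ := by
  have : Fact (0 < 2 * Real.pi) := ⟨Real.two_pi_pos⟩
  let e : Set.Ico x (x + 2 * Real.pi) ≃ Angle :=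
    (AddCircle.equivIco (2 * Real.pi) x).symm.trans (Equiv.subRight (y : Angle))
  have he (φ : Set.Ico x (x + 2 * Real.pi)) : e φ = ↑((φ : ℝ) - y) := rfl
  rw [e.bijective.existsUnique_iff]
  simp only [he, ExistsUnique, Subtype.exists, Subtype.forall, Subtype.mk.injEq, and_imp,
    exists_prop, and_assoc]

end UnitCircle

section BeachEllipse

open Real (cosh sinh cos sin tanh exp)

variable {R r s : ℝ}

lemma artanh_eq_real_artanh {x : ℝ} (hx : x ∈ Set.Icc (-1) 1) : artanh x = Real.artanh x :=
  (Real.artanh_eq_half_log hx).symm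

lemma cosh_sub_cosh_pos (hr : |r| < R) : 0 < cosh R - cosh r :=
  sub_pos.2 (Real.cosh_lt_cosh.2 (hr.trans_le (le_abs_self R)))

lemma cosh_sub_cosh_lt_sinh_sub_sinh_mul_cos (hr : |r| < R) (x : ℝ) :
    cosh R - cosh r < sinh R - sinh r * cos x := by
  have hexp : cosh R - sinh R < cosh |r| - sinh |r| := by
    rw [Real.cosh_sub_sinh, Real.cosh_sub_sinh]
    exact Real.exp_lt_exp.2 (neg_lt_neg hr)
  have hcos : sinh r * cos x ≤ sinh |r| := calc
    sinh r * cos x ≤ |sinh r| * |cos x| := abs_mul (sinh r) _ ▸ le_abs_self _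
    _ ≤ |sinh r| := mul_le_of_le_one_right (abs_nonneg _) (Real.abs_cos_le_one x)
    _ = sinh |r| := Real.abs_sinh r
  rw [Real.cosh_abs] at hexp
  linarith

lemma sinh_sub_sinh_mul_cos_pos (hr : |r| < R) (x : ℝ) : 0 < sinh R - sinh r * cos x :=
  (cosh_sub_cosh_pos hr).trans (cosh_sub_cosh_lt_sinh_sub_sinh_mul_cos hr x)

lemma tanh_ellipseFun (hr : |r| < R) (φ₀ φ : ℝ) :
    tanh (ellipseFun R r φ₀ φ) = (cosh R - cosh r) / (sinh R - sinh r * cos (φ - φ₀)) := by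
  have hden := sinh_sub_sinh_mul_cos_pos hr (φ - φ₀)
  have hpos := div_pos (cosh_sub_cosh_pos hr) hden
  have hlt := (div_lt_one hden).2 (cosh_sub_cosh_lt_sinh_sub_sinh_mul_cos hr (φ - φ₀))
  rw [ellipseFun, artanh_eq_real_artanh ⟨by linarith, hlt.le⟩, Real.tanh_artanh ⟨by linarith, hlt⟩]

lemma tanh_lt_tanh_iff {x y : ℝ} : tanh x < tanh y ↔ x < y := by
  rw [← Real.artanh_lt_artanh_iff ⟨Real.neg_one_lt_tanh x, Real.tanh_lt_one x⟩
    ⟨Real.neg_one_lt_tanh y, Real.tanh_lt_one y⟩, Real.artanh_tanh, Real.artanh_tanh]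

lemma ellipseFun_eq_iff (hr : |r| < R) (hs : |s| < R) (α β φ ψ : ℝ) :
    ellipseFun R r α φ = ellipseFun R s β ψ ↔
      (cosh R - cosh r) * (sinh R - sinh s * cos (ψ - β)) =
        (cosh R - cosh s) * (sinh R - sinh r * cos (φ - α)) := by
  rw [← Real.tanh_injective.eq_iff, tanh_ellipseFun hr, tanh_ellipseFun hs,
    div_eq_div_iff (sinh_sub_sinh_mul_cos_pos hr _).ne' (sinh_sub_sinh_mul_cos_pos hs _).ne']

lemma ellipseFun_lt_iff (hr : |r| < R) (hs : |s| < R) (α β φ ψ : ℝ) :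
    ellipseFun R r α φ < ellipseFun R s β ψ ↔
      (cosh R - cosh r) * (sinh R - sinh s * cos (ψ - β)) <
        (cosh R - cosh s) * (sinh R - sinh r * cos (φ - α)) := by
  rw [← tanh_lt_tanh_iff, tanh_ellipseFun hr, tanh_ellipseFun hs,
    div_lt_div_iff₀ (sinh_sub_sinh_mul_cos_pos hr _) (sinh_sub_sinh_mul_cos_pos hs _)]

lemma tanh_add_div_two {x y : ℝ} (hxy : x ≠ y) :
    tanh ((x + y) / 2) = (cosh x - cosh y) / (sinh x - sinh y) := by
  obtain ⟨m, d, rfl, rfl⟩ : ∃ m d : ℝ, x = m + d ∧ y = m - d :=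
    ⟨(x + y) / 2, (x - y) / 2, by ring, by ring⟩
  have hd : sinh d ≠ 0 := Real.sinh_eq_zero.not.2 fun hd ↦ hxy (by rw [hd, add_zero, sub_zero])
  have hcosh : cosh (m + d) - cosh (m - d) = sinh m * (2 * sinh d) := by
    rw [Real.cosh_add, Real.cosh_sub]
    ring
  have hsinh : sinh (m + d) - sinh (m - d) = cosh m * (2 * sinh d) := by
    rw [Real.sinh_add, Real.sinh_sub]
    ring
  rw [hcosh, hsinh, mul_div_mul_right _ _ (mul_ne_zero two_ne_zero hd),
    ← Real.tanh_eq_sinh_div_cosh]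
  congr 1
  ring

lemma ellipseFun_self (hr : |r| < R) (φ₀ : ℝ) : ellipseFun R r φ₀ φ₀ = (R + r) / 2 :=
  Real.tanh_injective <| by
    rw [tanh_ellipseFun hr, sub_self, Real.cos_zero, mul_one,
      tanh_add_div_two ((le_abs_self r).trans_lt hr).ne']

lemma ellipseFun_lt_ellipseFun_iff_cos_lt_cos (hr₀ : 0 < r) (hr : r < R) (φ₀ φ ψ : ℝ) :
    ellipseFun R r φ₀ φ < ellipseFun R r φ₀ ψ ↔ cos (φ - φ₀) < cos (ψ - φ₀) := by
  have hr' : |r| < R := by rwa [abs_of_pos hr₀]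
  rw [ellipseFun_lt_iff hr' hr', mul_lt_mul_iff_right₀ (cosh_sub_cosh_pos hr'),
    sub_lt_sub_iff_left, mul_lt_mul_iff_right₀ (Real.sinh_pos_iff.2 hr₀)]

lemma ellipseFun_le_ellipseFun_self (hr₀ : 0 ≤ r) (hr : r < R) (φ₀ φ : ℝ) :
    ellipseFun R r φ₀ φ ≤ ellipseFun R r φ₀ φ₀ := by
  rcases hr₀.eq_or_lt with rfl | hr_pos
  · simp only [ellipseFun, Real.sinh_zero, zero_mul, le_refl]
  · rw [← not_lt, ellipseFun_lt_ellipseFun_iff_cos_lt_cos hr_pos hr, sub_self, Real.cos_zero,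
      not_lt]
    exact Real.cos_le_one _

lemma ellipseFun_lt_ellipseFun_self_iff (hr₀ : 0 < r) (hr : r < R) (φ₀ φ : ℝ) :
    ellipseFun R r φ₀ φ < ellipseFun R r φ₀ φ₀ ↔ ¬ ∃ k : ℤ, φ₀ - φ = 2 * Real.pi * k := by
  rw [ellipseFun_lt_ellipseFun_iff_cos_lt_cos hr₀ hr, sub_self, Real.cos_zero,
    (Real.cos_le_one _).lt_iff_ne, ← Real.cos_neg, neg_sub, Ne, Real.cos_eq_one_iff]
  simp only [eq_comm, mul_comm]

lemma ellipseFun_lt_ellipseFun_self_of_le (hr₀ : 0 ≤ r) (hs₀ : 0 < s) (hrs : r ≤ s) (hs : s < R)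
    {α β : ℝ} (hne : r ≠ s ∨ ¬ ∃ k : ℤ, α - β = 2 * Real.pi * k) :
    ellipseFun R r α β < ellipseFun R s β β := by
  rcases hrs.eq_or_lt with rfl | hlt
  · calc ellipseFun R r α β
      _ < ellipseFun R r α α :=
        (ellipseFun_lt_ellipseFun_self_iff hs₀ hs α β).2 (hne.resolve_left (· rfl))
      _ = (R + r) / 2 := ellipseFun_self (by rwa [abs_of_pos hs₀]) α
      _ = ellipseFun R r β β := (ellipseFun_self (by rwa [abs_of_pos hs₀]) β).symm
  · calc ellipseFun R r α β
      _ ≤ ellipseFun R r α α := ellipseFun_le_ellipseFun_self hr₀ (hlt.trans hs) α β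
      _ = (R + r) / 2 := ellipseFun_self ((abs_of_nonneg hr₀).trans_lt (hlt.trans hs)) α
      _ < (R + s) / 2 := by linarith
      _ = ellipseFun R s β β := (ellipseFun_self (by rwa [abs_of_pos hs₀]) β).symm

lemma exists_secant_of_ellipseFun_lt {α β : ℝ} (hrs : |r| ≤ |s|) (hs : |s| < R)
    (hlt : ellipseFun R r α β < ellipseFun R s β β) :
    ∃ a b c : ℝ, |c| < a ∧ ∀ φ, ellipseFun R r α φ = ellipseFun R s β φ ↔
      a * cos (φ - β) + b * sin (φ - β) = c := by
  have hr : |r| < R := hrs.trans_lt hs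
  have hc : 0 ≤ (cosh s - cosh r) * sinh R :=
    mul_nonneg (sub_nonneg.2 (Real.cosh_le_cosh.2 hrs))
      (Real.sinh_nonneg_iff.2 ((abs_nonneg s).trans hs.le))
  refine ⟨(cosh R - cosh r) * sinh s - (cosh R - cosh s) * sinh r * cos (α - β),
    -((cosh R - cosh s) * sinh r * sin (α - β)), (cosh s - cosh r) * sinh R, ?_, fun φ ↦ ?_⟩
  · rw [ellipseFun_lt_iff hr hs, sub_self, Real.cos_zero, ← neg_sub α β, Real.cos_neg] at hlt
    rw [abs_of_nonneg hc]
    linarith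
  · rw [ellipseFun_eq_iff hr hs, ← sub_sub_sub_cancel_right φ α β, Real.cos_sub (φ - β)]
    constructor <;> intro h <;> linear_combination -h

end BeachEllipse

/-- The two intersections of the beach ellipses of two distinct sites `S`, `T` with
`0 < r_S ≤ r_T < R` lie on opposite sides of the line through the pole and `T`:
among the angles `φ ∈ [0, 2π)` where the radius functions agree, exactly one has
`sin (φ − φ_T) > 0`, exactly one has `sin (φ − φ_T) < 0`, and none has
`sin (φ − φ_T) = 0`. -/
theorem intersections_opposite_sides (R rS φS rT φT : ℝ) (hR : 0 < R)
    (hdist : rS ≠ rT ∨ ¬ ∃ k : ℤ, φS - φT = 2 * Real.pi * k)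
    (hrS : 0 < rS) (hST : rS ≤ rT) (hrT : rT < R) :
    (∃! φ : ℝ, φ ∈ Set.Ico 0 (2 * Real.pi) ∧
        ellipseFun R rS φS φ = ellipseFun R rT φT φ ∧ Real.sin (φ - φT) > 0) ∧
      (∃! φ : ℝ, φ ∈ Set.Ico 0 (2 * Real.pi) ∧
        ellipseFun R rS φS φ = ellipseFun R rT φT φ ∧ Real.sin (φ - φT) < 0) ∧
      ¬ ∃ φ : ℝ, φ ∈ Set.Ico 0 (2 * Real.pi) ∧
        ellipseFun R rS φS φ = ellipseFun R rT φT φ ∧ Real.sin (φ - φT) = 0 := by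
  have hrT_pos : 0 < rT := hrS.trans_le hST
  obtain ⟨a, b, c, hca, hsecant⟩ := exists_secant_of_ellipseFun_lt
    (by rwa [abs_of_pos hrS, abs_of_pos hrT_pos]) (by rwa [abs_of_pos hrT_pos])
    (ellipseFun_lt_ellipseFun_self_of_le hrS.le hrT_pos hST hrT hdist)
  simp only [hsecant]
  refine ⟨?_, ?_, ?_⟩
  · simpa only [zero_add, Real.Angle.cos_coe, Real.Angle.sin_coe] using
      (existsUnique_mem_Ico_coe_sub_iff _ 0 φT).2 (existsUnique_secant_sin_pos b hca)
  · simpa only [zero_add, Real.Angle.cos_coe, Real.Angle.sin_coe] using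
      (existsUnique_mem_Ico_coe_sub_iff _ 0 φT).2 (existsUnique_secant_sin_neg b hca)
  · rintro ⟨φ, -, hφ, hsin⟩
    exact sin_ne_zero_of_secant (θ := ↑(φ - φT)) hca hφ hsin
end

section
/- Let S = (r_S, φ_S) and T = (r_T, φ_T) be two distinct sites (i.e. r_S ≠ r_T, or φ_S − φ_T is not a multiple of 2π) with 0 < r_S ≤ r_T, and let P = (r_P, φ_T) be the unique point with 0 ≤ r_P ≤ r_T and dH(P, S) = r_T − r_P (the intersection of the segment from the pole O to T with the perpendicular bisector of S and T). Let r_T < R₁ < R₂ be two sweep-circle radii, let Q be a point with dH(Q, S) = dH(Q, T) = R₁ − r(Q) and sin(φ(Q) − φ_T) > 0, and let Q' be a point with dH(Q', S) = dH(Q', T) = R₂ − r(Q') and sin(φ(Q') − φ_T) > 0. Then dH(P, Q) < dH(P, Q'). The same conclusion holds when both conditions sin(φ(Q) − φ_T) > 0 and sin(φ(Q') − φ_T) > 0 are replaced by sin(φ(Q) − φ_T) < 0 and sin(φ(Q') − φ_T) < 0. (As the sweep circle expands, each of the two beach-ellipse intersections of S and T moves along the bisector of S and T monotonically away from P.) 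-/
/-!
In the hyperboloid model the region `dH(X, T) + r(X) ≤ R` bounded by a beach ellipse is cut out by
a convex cone, so it contains every geodesic segment between two of its points. The points `P` and
`Q` both lie in the region of radius `R₁`. The points `P`, `Q`, `Q'` lie in the plane through the
origin that cuts out the bisector of `S` and `T`, with `Q` and `Q'` on the same side of `P`. If `Q'`
were not farther from `P` than `Q`, it would be a nonnegative combination of `P` and `Q`, that is,
a point of the segment `PQ`, and hence lie in the region of radius `R₁`, although
`dH(Q', T) + r(Q') = R₂ > R₁`.
-/

open Real (cosh sinh cos sin)

section BilinForm

variable {V : Type*} [AddCommGroup V] [Module ℝ V]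

lemma left_coeff_nonneg_of_bilinForm_le {B : LinearMap.BilinForm ℝ V} (hB : B.IsSymm) {p x : V}
    {a b : ℝ} (hp : B p p = 1) (hx : B x x = 1) (hy : B (a • p + b • x) (a • p + b • x) = 1)
    (hb : 0 < b) (hpx : 1 < B p x) (hpy : 0 ≤ B p (a • p + b • x))
    (hle : B p (a • p + b • x) ≤ B p x) : 0 ≤ a := by
  have hxp : B x p = B p x := (hB.eq p x).symm
  simp only [map_add, map_smul, LinearMap.add_apply, LinearMap.smul_apply, smul_eq_mul,
    hp, hx, hxp, mul_one] at hy hpy hle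
  set c := B p x
  have hb_le : b ≤ 1 := by
    have hsq : b ^ 2 * (c ^ 2 - 1) ≤ 1 * (c ^ 2 - 1) :=
      calc b ^ 2 * (c ^ 2 - 1) = (a + b * c) ^ 2 - 1 := by linear_combination -hy
        _ ≤ 1 * (c ^ 2 - 1) := by rw [one_mul]; gcongr
    have hc : 0 < c ^ 2 - 1 := by nlinarith
    exact (sq_le_one_iff₀ hb.le).1 (le_of_mul_le_mul_right hsq hc)
  by_contra! ha
  have hpos : 0 < a + b * c + b * c := by positivity
  have hneg : a * (a + b * c + b * c) < 0 := mul_neg_of_neg_of_pos ha hpos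
  nlinarith

end BilinForm

section LorentzForm

variable {E : Type*} [NormedAddCommGroup E] [InnerProductSpace ℝ E]

/-- The Lorentzian inner product on `ℝ × E`, with the sign for which the hyperboloid model of
hyperbolic space is a sheet of `lorentzForm x x = 1`. -/
noncomputable def lorentzForm : LinearMap.BilinForm ℝ (ℝ × E) :=
  (LinearMap.mul ℝ ℝ).compl₁₂ (LinearMap.fst ℝ ℝ E) (LinearMap.fst ℝ ℝ E) -
    (innerₗ E).compl₁₂ (LinearMap.snd ℝ ℝ E) (LinearMap.snd ℝ ℝ E)

lemma lorentzForm_apply (x y : ℝ × E) :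
    lorentzForm x y = x.1 * y.1 - inner ℝ x.2 y.2 := rfl

lemma lorentzForm_isSymm : (lorentzForm (E := E)).IsSymm :=
  ⟨fun x y => by simp [lorentzForm_apply, mul_comm, real_inner_comm]⟩

lemma lorentzForm_add_norm_le_of_combination {t x y : ℝ × E} {a b c s : ℝ} (ha : 0 ≤ a)
    (hb : 0 ≤ b) (hs : 0 ≤ s) (hx : lorentzForm x t + s * ‖x.2‖ ≤ c * x.1)
    (hy : lorentzForm y t + s * ‖y.2‖ ≤ c * y.1) :
    lorentzForm (a • x + b • y) t + s * ‖(a • x + b • y).2‖ ≤ c * (a • x + b • y).1 := by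
  have hnorm : ‖a • x.2 + b • y.2‖ ≤ a * ‖x.2‖ + b * ‖y.2‖ :=
    (norm_add_le _ _).trans_eq (by rw [norm_smul_of_nonneg ha, norm_smul_of_nonneg hb])
  calc lorentzForm (a • x + b • y) t + s * ‖a • x.2 + b • y.2‖
      ≤ lorentzForm (a • x + b • y) t + s * (a * ‖x.2‖ + b * ‖y.2‖) := by gcongr
    _ = a * (lorentzForm x t + s * ‖x.2‖) + b * (lorentzForm y t + s * ‖y.2‖) := by
        simp only [map_add, map_smul, LinearMap.add_apply, LinearMap.smul_apply, smul_eq_mul]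
        ring
    _ ≤ a * (c * x.1) + b * (c * y.1) := by gcongr
    _ = c * (a * x.1 + b * y.1) := by ring

lemma exists_eq_smul_add_smul_of_lorentzForm_eq_zero {n p x y : ℝ × ℂ} (hn : n ≠ 0)
    (hp : lorentzForm n p = 0) (hx : lorentzForm n x = 0) (hy : lorentzForm n y = 0)
    (hp₁ : p.1 ≠ 0) (hp_im : p.2.im = 0) (hx_im : x.2.im ≠ 0) :
    ∃ a : ℝ, y = a • p + (y.2.im / x.2.im) • x := by
  set b := y.2.im / x.2.im
  have him : y.2.im = b * x.2.im := (div_mul_cancel₀ _ hx_im).symm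
  simp only [lorentzForm_apply, Complex.inner, Complex.mul_re, Complex.conj_re, Complex.conj_im,
    hp_im] at hp hx hy
  have hn' : n.1 ≠ 0 ∨ n.2.re ≠ 0 := by
    by_contra! h
    have hn_im : n.2.im = 0 := by simpa [h.1, h.2, hx_im] using hx
    exact hn (Prod.ext h.1 (Complex.ext h.2 hn_im))
  -- `y - b • x` and `p` are orthogonal to `n` inside the plane `im = 0`, hence parallel.
  have hdiff : n.1 * (y.1 - b * x.1) = n.2.re * (y.2.re - b * x.2.re) := by
    rw [him] at hy
    linear_combination hy - b * hx
  have hparallel : (y.1 - b * x.1) * p.2.re = (y.2.re - b * x.2.re) * p.1 := by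
    rcases hn' with h | h
    · apply mul_left_cancel₀ h
      linear_combination p.2.re * hdiff - (y.2.re - b * x.2.re) * hp
    · apply mul_left_cancel₀ h
      linear_combination p.1 * hdiff - (y.1 - b * x.1) * hp
  refine ⟨(y.1 - b * x.1) / p.1, Prod.ext ?_ (Complex.ext ?_ ?_)⟩
  · simp [hp₁]
  · simp [div_mul_eq_mul_div, hparallel, hp₁]
  · simp [hp_im, him]

end LorentzForm

section Hyperboloid

variable {r r₁ r₂ θ₁ θ₂ : ℝ}

/-- The point of the hyperboloid model in `ℝ × ℂ` with hyperbolic polar coordinates `(r, θ)`. -/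
noncomputable def hyperboloidPoint (r θ : ℝ) : ℝ × ℂ :=
  (cosh r, sinh r * Complex.exp (θ * Complex.I))

@[simp] lemma hyperboloidPoint_fst (r θ : ℝ) : (hyperboloidPoint r θ).1 = cosh r := rfl

@[simp] lemma hyperboloidPoint_snd_re (r θ : ℝ) :
    (hyperboloidPoint r θ).2.re = sinh r * cos θ := by
  rw [hyperboloidPoint, Complex.re_ofReal_mul, Complex.exp_ofReal_mul_I_re]

@[simp] lemma hyperboloidPoint_snd_im (r θ : ℝ) :
    (hyperboloidPoint r θ).2.im = sinh r * sin θ := by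
  rw [hyperboloidPoint, Complex.im_ofReal_mul, Complex.exp_ofReal_mul_I_im]

lemma norm_hyperboloidPoint_snd (hr : 0 ≤ r) : ‖(hyperboloidPoint r θ).2‖ = sinh r := by
  rw [hyperboloidPoint, norm_mul, Complex.norm_exp_ofReal_mul_I, mul_one, Complex.norm_real,
    Real.norm_of_nonneg (Real.sinh_nonneg_iff.2 hr)]

lemma lorentzForm_hyperboloidPoint (r₁ θ₁ r₂ θ₂ : ℝ) :
    lorentzForm (hyperboloidPoint r₁ θ₁) (hyperboloidPoint r₂ θ₂) =
      cosh r₁ * cosh r₂ - sinh r₁ * sinh r₂ * cos (θ₁ - θ₂) := by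
  simp only [lorentzForm_apply, Complex.inner, Complex.mul_re, Complex.conj_re, Complex.conj_im,
    hyperboloidPoint_fst, hyperboloidPoint_snd_re, hyperboloidPoint_snd_im, Real.cos_sub]
  ring

lemma lorentzForm_hyperboloidPoint_self (r θ : ℝ) :
    lorentzForm (hyperboloidPoint r θ) (hyperboloidPoint r θ) = 1 := by
  rw [lorentzForm_hyperboloidPoint, sub_self, Real.cos_zero]
  linear_combination Real.cosh_sq r

lemma lorentzForm_hyperboloidPoint_eq_cosh_sub_add (r₁ θ₁ r₂ θ₂ : ℝ) :
    lorentzForm (hyperboloidPoint r₁ θ₁) (hyperboloidPoint r₂ θ₂) =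
      cosh (r₁ - r₂) + sinh r₁ * sinh r₂ * (1 - cos (θ₁ - θ₂)) := by
  rw [lorentzForm_hyperboloidPoint, Real.cosh_sub]
  ring

lemma cosh_sub_le_lorentzForm_hyperboloidPoint (hr₁ : 0 ≤ r₁) (hr₂ : 0 ≤ r₂) :
    cosh (r₁ - r₂) ≤ lorentzForm (hyperboloidPoint r₁ θ₁) (hyperboloidPoint r₂ θ₂) := by
  rw [lorentzForm_hyperboloidPoint_eq_cosh_sub_add]
  have := Real.sinh_nonneg_iff.2 hr₁
  have := Real.sinh_nonneg_iff.2 hr₂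
  have := sub_nonneg.2 (Real.cos_le_one (θ₁ - θ₂))
  exact le_add_of_nonneg_right (by positivity)

lemma one_le_lorentzForm_hyperboloidPoint (hr₁ : 0 ≤ r₁) (hr₂ : 0 ≤ r₂) :
    1 ≤ lorentzForm (hyperboloidPoint r₁ θ₁) (hyperboloidPoint r₂ θ₂) :=
  (Real.one_le_cosh _).trans (cosh_sub_le_lorentzForm_hyperboloidPoint hr₁ hr₂)

lemma one_lt_lorentzForm_hyperboloidPoint (hr₁ : 0 ≤ r₁) (hr₂ : 0 < r₂)
    (hsin : sin (θ₁ - θ₂) ≠ 0) :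
    1 < lorentzForm (hyperboloidPoint r₁ θ₁) (hyperboloidPoint r₂ θ₂) := by
  rcases eq_or_ne r₁ r₂ with rfl | hne
  · have hcos : cos (θ₁ - θ₂) < 1 :=
      (Real.cos_le_one _).lt_of_ne fun h => hsin (Real.sin_eq_zero_iff_cos_eq.2 (.inl h))
    have hsinh : 0 < sinh r₁ := Real.sinh_pos_iff.2 hr₂
    rw [lorentzForm_hyperboloidPoint_eq_cosh_sub_add, sub_self, Real.cosh_zero]
    exact lt_add_of_pos_right _ (mul_pos (mul_pos hsinh hsinh) (sub_pos.2 hcos))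
  · exact (Real.one_lt_cosh.2 (sub_ne_zero.2 hne)).trans_le
      (cosh_sub_le_lorentzForm_hyperboloidPoint hr₁ hr₂.le)

lemma hyperboloidPoint_ne (hr₁ : 0 < r₁) (hr₂ : 0 ≤ r₂)
    (h : r₁ ≠ r₂ ∨ ¬∃ k : ℤ, θ₁ - θ₂ = 2 * Real.pi * k) :
    hyperboloidPoint r₁ θ₁ ≠ hyperboloidPoint r₂ θ₂ := by
  intro heq
  obtain rfl : r₁ = r₂ := Real.cosh_injOn hr₁.le hr₂ (congrArg Prod.fst heq)
  have hsinh : sinh r₁ ≠ 0 := (Real.sinh_pos_iff.2 hr₁).ne'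
  have hform := lorentzForm_hyperboloidPoint_eq_cosh_sub_add r₁ θ₁ r₁ θ₂
  rw [heq, lorentzForm_hyperboloidPoint_self, sub_self, Real.cosh_zero] at hform
  have hcos : cos (θ₁ - θ₂) = 1 := by
    have : 1 - cos (θ₁ - θ₂) = 0 := by simpa [hsinh] using hform
    linarith
  obtain ⟨k, hk⟩ := (Real.cos_eq_one_iff _).1 hcos
  exact h.elim (· rfl) (· ⟨k, by rw [← hk, mul_comm]⟩)

lemma exists_nonneg_combination_of_lorentzForm_le {n : ℝ × ℂ} {rP rQ rQ' θQ θQ' : ℝ} (hn : n ≠ 0)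
    (hrP : 0 ≤ rP) (hrQ : 0 < rQ) (hrQ' : 0 < rQ')
    (hP : lorentzForm n (hyperboloidPoint rP 0) = 0)
    (hQ : lorentzForm n (hyperboloidPoint rQ θQ) = 0)
    (hQ' : lorentzForm n (hyperboloidPoint rQ' θQ') = 0)
    (hside : (0 < sin θQ ∧ 0 < sin θQ') ∨ (sin θQ < 0 ∧ sin θQ' < 0))
    (hle : lorentzForm (hyperboloidPoint rP 0) (hyperboloidPoint rQ' θQ') ≤
      lorentzForm (hyperboloidPoint rP 0) (hyperboloidPoint rQ θQ)) :
    ∃ a b : ℝ, 0 ≤ a ∧ 0 ≤ b ∧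
      hyperboloidPoint rQ' θQ' = a • hyperboloidPoint rP 0 + b • hyperboloidPoint rQ θQ := by
  have hsinh : 0 < sinh rQ := Real.sinh_pos_iff.2 hrQ
  have hsinh' : 0 < sinh rQ' := Real.sinh_pos_iff.2 hrQ'
  have hsin : sin θQ ≠ 0 := hside.elim (fun h => h.1.ne') (fun h => h.1.ne)
  have hratio : 0 < sin θQ' / sin θQ :=
    hside.elim (fun h => div_pos h.2 h.1) (fun h => div_pos_of_neg_of_neg h.2 h.1)
  obtain ⟨a, ha⟩ := exists_eq_smul_add_smul_of_lorentzForm_eq_zero hn hP hQ hQ'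
    (Real.cosh_pos rP).ne' (by simp) (by simp [hsin, hsinh.ne'])
  set b := (hyperboloidPoint rQ' θQ').2.im / (hyperboloidPoint rQ θQ).2.im with hb_def
  have hb : 0 < b := by
    rw [hb_def, hyperboloidPoint_snd_im, hyperboloidPoint_snd_im, mul_div_mul_comm]
    exact mul_pos (div_pos hsinh' hsinh) hratio
  have hself := lorentzForm_hyperboloidPoint_self rQ' θQ'
  have hPQ' := one_le_lorentzForm_hyperboloidPoint (θ₁ := 0) (θ₂ := θQ') hrP hrQ'.le
  rw [ha] at hself hPQ' hle
  have hPQ := one_lt_lorentzForm_hyperboloidPoint (θ₁ := 0) (θ₂ := θQ) hrP hrQ (by simpa using hsin)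
  have ha_nonneg := left_coeff_nonneg_of_bilinForm_le lorentzForm_isSymm
    (lorentzForm_hyperboloidPoint_self rP 0) (lorentzForm_hyperboloidPoint_self rQ θQ) hself hb
    hPQ (zero_le_one.trans hPQ') hle
  exact ⟨a, b, ha_nonneg, hb.le, ha⟩

end Hyperboloid

section Distance

variable {r r₁ r₂ φ φ₁ φ₂ : ℝ}

lemma dH_eq_arcosh_lorentzForm (r₁ φ₁ r₂ φ₂ φ : ℝ) :
    dH r₁ φ₁ r₂ φ₂ =
      Real.arcosh (lorentzForm (hyperboloidPoint r₁ (φ₁ - φ)) (hyperboloidPoint r₂ (φ₂ - φ))) := by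
  rw [lorentzForm_hyperboloidPoint, sub_sub_sub_cancel_right]
  rfl

lemma dH_nonneg_s7 (hr₁ : 0 ≤ r₁) (hr₂ : 0 ≤ r₂) : 0 ≤ dH r₁ φ₁ r₂ φ₂ := by
  rw [dH_eq_arcosh_lorentzForm r₁ φ₁ r₂ φ₂ 0]
  exact Real.arcosh_nonneg (one_le_lorentzForm_hyperboloidPoint hr₁ hr₂)

lemma cosh_dH_s7 (hr₁ : 0 ≤ r₁) (hr₂ : 0 ≤ r₂) (φ : ℝ) :
    cosh (dH r₁ φ₁ r₂ φ₂) =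
      lorentzForm (hyperboloidPoint r₁ (φ₁ - φ)) (hyperboloidPoint r₂ (φ₂ - φ)) := by
  rw [dH_eq_arcosh_lorentzForm _ _ _ _ φ,
    Real.cosh_arcosh (one_le_lorentzForm_hyperboloidPoint hr₁ hr₂)]

lemma dH_le_iff_cosh_le (hr₁ : 0 ≤ r₁) (hr₂ : 0 ≤ r₂) {d : ℝ} (hd : 0 ≤ d) :
    dH r₁ φ₁ r₂ φ₂ ≤ d ↔ cosh (dH r₁ φ₁ r₂ φ₂) ≤ cosh d :=
  (Real.cosh_strictMonoOn.le_iff_le (dH_nonneg_s7 hr₁ hr₂) hd).symm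

lemma abs_sub_le_dH (hr₁ : 0 ≤ r₁) (hr₂ : 0 ≤ r₂) : |r₁ - r₂| ≤ dH r₁ φ₁ r₂ φ₂ := by
  rw [← abs_of_nonneg (dH_nonneg_s7 (φ₁ := φ₁) (φ₂ := φ₂) hr₁ hr₂), ← Real.cosh_le_cosh,
    cosh_dH_s7 hr₁ hr₂ 0]
  exact cosh_sub_le_lorentzForm_hyperboloidPoint hr₁ hr₂

lemma dH_same_angle (r₁ r₂ φ : ℝ) : dH r₁ φ r₂ φ = |r₁ - r₂| := by
  rw [dH_eq_arcosh_lorentzForm _ _ _ _ 0, lorentzForm_hyperboloidPoint_eq_cosh_sub_add, sub_self,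
    Real.cos_zero, sub_self, mul_zero, add_zero, ← Real.cosh_abs,
    Real.arcosh_cosh (abs_nonneg _)]

lemma dH_zero_left (hr : 0 ≤ r) : dH 0 φ₁ r φ₂ = r := by
  rw [dH_eq_arcosh_lorentzForm _ _ _ _ 0, lorentzForm_hyperboloidPoint, Real.cosh_zero,
    Real.sinh_zero, one_mul, zero_mul, zero_mul, sub_zero, Real.arcosh_cosh hr]

lemma lorentzForm_sub_eq_zero_of_dH_eq {rS φS rT φT : ℝ} (hr : 0 ≤ r) (hrS : 0 ≤ rS)
    (hrT : 0 ≤ rT) (h : dH r φ rS φS = dH r φ rT φT) (φ₀ : ℝ) :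
    lorentzForm (hyperboloidPoint rT (φT - φ₀) - hyperboloidPoint rS (φS - φ₀))
      (hyperboloidPoint r (φ - φ₀)) = 0 := by
  rw [lorentzForm_isSymm.eq_iff, map_sub, ← cosh_dH_s7 hr hrT, ← cosh_dH_s7 hr hrS, h, sub_self]

end Distance

section BeachEllipse

variable {R r rT φ φT : ℝ}

lemma pos_of_dH_eq_sub (hr : 0 ≤ r) (hrT : 0 ≤ rT) (hR : rT < R) (h : dH r φ rT φT = R - r) :
    0 < r := by
  refine hr.lt_of_ne' ?_
  rintro rfl
  rw [dH_zero_left hrT, sub_zero] at h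
  exact hR.ne h

lemma dH_le_sub_iff (hr : 0 ≤ r) (hrT : 0 ≤ rT) (hR : rT < R) (φ₀ : ℝ) :
    dH r φ rT φT ≤ R - r ↔
      lorentzForm (hyperboloidPoint r (φ - φ₀)) (hyperboloidPoint rT (φT - φ₀)) +
        sinh R * ‖(hyperboloidPoint r (φ - φ₀)).2‖ ≤
      cosh R * (hyperboloidPoint r (φ - φ₀)).1 := by
  rw [← cosh_dH_s7 hr hrT, norm_hyperboloidPoint_snd hr, hyperboloidPoint_fst, ← le_sub_iff_add_le,
    ← Real.cosh_sub]
  rcases le_or_gt r R with hrR | hrR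
  · exact dH_le_iff_cosh_le hr hrT (sub_nonneg.2 hrR)
  -- Beyond radius `R` both sides fail, because `dH ≥ r - rT > r - R`.
  · have hlt : r - R < dH r φ rT φT :=
      (sub_lt_sub_left hR r).trans_le ((le_abs_self _).trans (abs_sub_le_dH hr hrT))
    refine iff_of_false (by linarith) ?_
    rw [← neg_sub r R, Real.cosh_neg, ← dH_le_iff_cosh_le hr hrT (by linarith)]
    exact hlt.not_ge

lemma dH_le_sub_of_hyperboloidPoint_eq {r₁ φ₁ r₂ φ₂ φ₀ a b : ℝ} (hrT : 0 ≤ rT) (hR : rT < R)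
    (hr : 0 ≤ r) (hr₁ : 0 ≤ r₁) (hr₂ : 0 ≤ r₂) (ha : 0 ≤ a) (hb : 0 ≤ b)
    (h : hyperboloidPoint r (φ - φ₀) =
      a • hyperboloidPoint r₁ (φ₁ - φ₀) + b • hyperboloidPoint r₂ (φ₂ - φ₀))
    (h₁ : dH r₁ φ₁ rT φT ≤ R - r₁) (h₂ : dH r₂ φ₂ rT φT ≤ R - r₂) :
    dH r φ rT φT ≤ R - r := by
  rw [dH_le_sub_iff hr hrT hR φ₀, h]
  exact lorentzForm_add_norm_le_of_combination ha hb
    (Real.sinh_nonneg_iff.2 (hrT.trans hR.le))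
    ((dH_le_sub_iff hr₁ hrT hR φ₀).1 h₁) ((dH_le_sub_iff hr₂ hrT hR φ₀).1 h₂)

end BeachEllipse

/-- As the sweep circle expands, each of the two beach-ellipse intersections of two
distinct sites `S`, `T` (with `0 < r_S ≤ r_T`) moves along the bisector of `S` and
`T` monotonically away from the point `P`, the intersection of the segment from the
pole to `T` with the bisector.  Here `Q` and `Q'` are the intersections on the same
side of the line through the pole and `T`, for sweep radii `R₁ < R₂`. -/
theorem intersections_move (rS φS rT φT : ℝ)
    (hdist : rS ≠ rT ∨ ¬ ∃ k : ℤ, φS - φT = 2 * Real.pi * k)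
    (hrS : 0 < rS) (hST : rS ≤ rT)
    (rP : ℝ) (hrP₀ : 0 ≤ rP) (hrP : rP ≤ rT) (hP : dH rP φT rS φS = rT - rP)
    (R₁ R₂ : ℝ) (hR₁ : rT < R₁) (hR₁₂ : R₁ < R₂)
    (rQ φQ : ℝ) (hrQ : 0 ≤ rQ)
    (hQS : dH rQ φQ rS φS = R₁ - rQ) (hQT : dH rQ φQ rT φT = R₁ - rQ)
    (rQ' φQ' : ℝ) (hrQ' : 0 ≤ rQ')
    (hQ'S : dH rQ' φQ' rS φS = R₂ - rQ') (hQ'T : dH rQ' φQ' rT φT = R₂ - rQ')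
    (hside : (Real.sin (φQ - φT) > 0 ∧ Real.sin (φQ' - φT) > 0) ∨
      (Real.sin (φQ - φT) < 0 ∧ Real.sin (φQ' - φT) < 0)) :
    dH rP φT rQ φQ < dH rP φT rQ' φQ' := by
  by_contra! hle
  have hrT : 0 < rT := hrS.trans_le hST
  have hPT : dH rP φT rT φT = rT - rP := by
    rw [dH_same_angle, abs_sub_comm, abs_of_nonneg (sub_nonneg.2 hrP)]
  have hn : hyperboloidPoint rT (φT - φT) - hyperboloidPoint rS (φS - φT) ≠ 0 :=
    sub_ne_zero.2 (hyperboloidPoint_ne hrS hrT.le (by rwa [sub_sub_sub_cancel_right])).symm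
  rw [dH_le_iff_cosh_le hrP₀ hrQ' (dH_nonneg_s7 hrP₀ hrQ), cosh_dH_s7 hrP₀ hrQ' φT,
    cosh_dH_s7 hrP₀ hrQ φT, sub_self] at hle
  have hP_bisector := lorentzForm_sub_eq_zero_of_dH_eq hrP₀ hrS.le hrT.le (hP.trans hPT.symm) φT
  obtain ⟨a, b, ha, hb, hQ'_eq⟩ := exists_nonneg_combination_of_lorentzForm_le hn hrP₀
    (pos_of_dH_eq_sub hrQ hrT.le hR₁ hQT) (pos_of_dH_eq_sub hrQ' hrT.le (hR₁.trans hR₁₂) hQ'T)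
    (by simpa only [sub_self] using hP_bisector)
    (lorentzForm_sub_eq_zero_of_dH_eq hrQ hrS.le hrT.le (hQS.trans hQT.symm) φT)
    (lorentzForm_sub_eq_zero_of_dH_eq hrQ' hrS.le hrT.le (hQ'S.trans hQ'T.symm) φT) hside hle
  have hQ'_le : dH rQ' φQ' rT φT ≤ R₁ - rQ' :=
    dH_le_sub_of_hyperboloidPoint_eq hrT.le hR₁ hrQ' hrP₀ hrQ ha hb (by rwa [sub_self φT])
      (by linarith) hQT.le
  linarith
end
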